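/- A CLSP instance with positive unit capacity usages K_i > 0 has a feasible solution if and only if the cumulative capacity covers the cumulative weighted demand in every prefix of periods, i.e., if and only if \sum_{j=1}^{t} \sum_{i=1}^{N} K_i d_{i,j} \le \sum_{j=1}^{t} C_j for every t \in \{1,...,T\}. -/

import Mathlib

/-- Feasibility of a solution `(x, y, I)` for the CLSP model (P1):
nonnegative production and inventories, binary setups, zero initial inventory,
inventory balance, capacity constraints, and setup-forcing constraints
(imposed whenever `K i > 0`). -/
def CLSPFeasible (N T : ℕ) (d : ℕ → ℕ → ℝ) (K C : ℕ → ℝ)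
    (x y I : ℕ → ℕ → ℝ) : Prop :=
  (∀ i ∈ Finset.Icc 1 N, ∀ t ∈ Finset.Icc 1 T, 0 ≤ x i t) ∧
  (∀ i ∈ Finset.Icc 1 N, ∀ t ∈ Finset.Icc 1 T, 0 ≤ I i t) ∧
  (∀ i ∈ Finset.Icc 1 N, ∀ t ∈ Finset.Icc 1 T, y i t = 0 ∨ y i t = 1) ∧
  (∀ i ∈ Finset.Icc 1 N, I i 0 = 0) ∧
  (∀ i ∈ Finset.Icc 1 N, ∀ t ∈ Finset.Icc 1 T,
      I i (t - 1) + x i t - I i t = d i t) ∧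
  (∀ t ∈ Finset.Icc 1 T, ∑ i ∈ Finset.Icc 1 N, K i * x i t ≤ C t) ∧
  (∀ i ∈ Finset.Icc 1 N, ∀ t ∈ Finset.Icc 1 T, 0 < K i →
      x i t ≤ min (C t / K i) (∑ r ∈ Finset.Icc t T, d i r) * y i t)

/-!
Consume capacity in chronological order and serve demands in chronological order: this is the
north-west corner rule of transportation theory. Put the cumulative capacities `A 0 ≤ A 1 ≤ ⋯` and
the cumulative weighted demands `B 0 ≤ B 1 ≤ ⋯` on one axis; capacity of period `t` serves demand of
period `j` by the length of the overlap of `[A (t - 1), A t]` and `[B (j - 1), B j]`. The prefix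
condition `B ≤ A` says that no demand is served late. All items demanded in period `j` are then
served in the same proportions, so a single aggregate plan yields a schedule for every item.
-/

section CumulativeSum

/-- The sum of `f` over the periods `1, …, t`; periods are numbered from `1`, so the value at `0`
is the empty sum. -/
def cumulativeSum {M : Type*} [AddCommMonoid M] (f : ℕ → M) (t : ℕ) : M :=
  ∑ s ∈ Finset.Icc 1 t, f s

@[simp]
theorem cumulativeSum_zero {M : Type*} [AddCommMonoid M] (f : ℕ → M) : cumulativeSum f 0 = 0 := rfl

theorem cumulativeSum_pred_add {M : Type*} [AddCommMonoid M] (f : ℕ → M) {t : ℕ} (ht : 1 ≤ t) :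
    cumulativeSum f (t - 1) + f t = cumulativeSum f t := by
  obtain ⟨s, rfl⟩ := Nat.exists_eq_add_of_le' ht
  exact (Finset.sum_Icc_succ_top ht f).symm

theorem cumulativeSum_sub_pred {G : Type*} [AddCommGroup G] (f : ℕ → G) (n : ℕ) :
    cumulativeSum (fun t => f t - f (t - 1)) n = f n - f 0 := by
  induction n with
  | zero => simp
  | succ n ih =>
    rw [← cumulativeSum_pred_add _ n.succ_pos, Nat.succ_sub_one, ih]
    abel

theorem cumulativeSum_le_cumulativeSum {M : Type*} [AddCommMonoid M] [PartialOrder M]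
    [IsOrderedAddMonoid M] {f : ℕ → M} {T : ℕ} (hf : ∀ t ∈ Finset.Icc 1 T, 0 ≤ f t) {s t : ℕ}
    (hst : s ≤ t) (htT : t ≤ T) : cumulativeSum f s ≤ cumulativeSum f t :=
  Finset.sum_le_sum_of_subset_of_nonneg (Finset.Icc_subset_Icc_right hst) fun r hr _ =>
    hf r (Finset.Icc_subset_Icc_right htT hr)

end CumulativeSum

section NorthwestCorner

variable {G : Type*} [AddCommGroup G] [LinearOrder G]

theorem min_sub_min_le_min_sub_min [IsOrderedAddMonoid G] {a a' b b' : G} (ha : a ≤ a')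
    (hb : b ≤ b') : min a' b - min a b ≤ min a' b' - min a b' := by
  rcases le_total a' b with ha'b | hba'
  · rw [min_eq_left ha'b, min_eq_left (ha.trans ha'b), min_eq_left (ha'b.trans hb),
      min_eq_left ((ha.trans ha'b).trans hb)]
  rcases le_total a b with hab | hba
  · rw [min_eq_right hba', min_eq_left hab, min_eq_left (hab.trans hb)]
    exact sub_le_sub_right (le_min hba' hb) a
  · rw [min_eq_right hba', min_eq_right hba, sub_self, sub_nonneg]
    exact min_le_min_right b' ha

theorem min_sub_min_le_sub [IsOrderedAddMonoid G] {a a' : G} (ha : a ≤ a') (b : G) :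
    min a' b - min a b ≤ a' - a := by
  rw [sub_le_iff_le_add, add_min, sub_add_cancel]
  exact min_le_min_left a' (le_add_of_nonneg_left (sub_nonneg.2 ha))

/-- The north-west corner rule: the amount of the demand `w j` served from the capacity `C t` when
both are used up in chronological order. The first `t` capacities serve
`min (cumulativeSum C t) (cumulativeSum w j)` of the first `j` demands, and the rule is the mixed
difference of this quantity in `t` and `j`. -/
def northwestCorner (C w : ℕ → G) (t j : ℕ) : G :=
  (min (cumulativeSum C t) (cumulativeSum w j) -
      min (cumulativeSum C (t - 1)) (cumulativeSum w j)) -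
    (min (cumulativeSum C t) (cumulativeSum w (j - 1)) -
      min (cumulativeSum C (t - 1)) (cumulativeSum w (j - 1)))

theorem northwestCorner_eq_zero_of_weight_eq_zero {w : ℕ → G} {j : ℕ} (C : ℕ → G) (t : ℕ)
    (hj : 1 ≤ j) (hwj : w j = 0) : northwestCorner C w t j = 0 := by
  have hB : cumulativeSum w (j - 1) = cumulativeSum w j := by
    rw [← cumulativeSum_pred_add w hj, hwj, add_zero]
  rw [northwestCorner, hB, sub_self]

variable [IsOrderedAddMonoid G] {T : ℕ} {C w : ℕ → G} {t j : ℕ}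

theorem northwestCorner_nonneg (hC : ∀ t ∈ Finset.Icc 1 T, 0 ≤ C t)
    (hw : ∀ j ∈ Finset.Icc 1 T, 0 ≤ w j) (ht : t ≤ T) (hj : j ≤ T) :
    0 ≤ northwestCorner C w t j :=
  sub_nonneg.2 <| min_sub_min_le_min_sub_min
    (cumulativeSum_le_cumulativeSum hC (Nat.sub_le t 1) ht)
    (cumulativeSum_le_cumulativeSum hw (Nat.sub_le j 1) hj)

theorem northwestCorner_eq_zero_of_lt (hC : ∀ t ∈ Finset.Icc 1 T, 0 ≤ C t)
    (hw : ∀ j ∈ Finset.Icc 1 T, 0 ≤ w j) (ht : t ≤ T) (hjt : j < t)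
    (hprefix : cumulativeSum w j ≤ cumulativeSum C j) : northwestCorner C w t j = 0 := by
  have hB : cumulativeSum w (j - 1) ≤ cumulativeSum w j :=
    cumulativeSum_le_cumulativeSum hw (Nat.sub_le j 1) (hjt.le.trans ht)
  have hBA : cumulativeSum w j ≤ cumulativeSum C (t - 1) :=
    hprefix.trans (cumulativeSum_le_cumulativeSum hC (by omega) (by omega))
  have hA : cumulativeSum C (t - 1) ≤ cumulativeSum C t :=
    cumulativeSum_le_cumulativeSum hC (Nat.sub_le t 1) ht
  rw [northwestCorner, min_eq_right (hBA.trans hA), min_eq_right hBA,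
    min_eq_right (hB.trans (hBA.trans hA)), min_eq_right (hB.trans hBA), sub_self, sub_self,
    sub_self]

theorem sum_northwestCorner_capacities (hw : ∀ j ∈ Finset.Icc 1 T, 0 ≤ w j)
    (hprefix : cumulativeSum w T ≤ cumulativeSum C T) (hj : j ∈ Finset.Icc 1 T) :
    ∑ t ∈ Finset.Icc 1 T, northwestCorner C w t j = w j := by
  obtain ⟨hj1, hjT⟩ := Finset.mem_Icc.1 hj
  have hserved : ∀ k ≤ T, ∑ t ∈ Finset.Icc 1 T, (min (cumulativeSum C t) (cumulativeSum w k) -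
      min (cumulativeSum C (t - 1)) (cumulativeSum w k)) = cumulativeSum w k := by
    intro k hk
    have h0 : 0 ≤ cumulativeSum w k := cumulativeSum_le_cumulativeSum hw k.zero_le hk
    have hkT : cumulativeSum w k ≤ cumulativeSum C T :=
      (cumulativeSum_le_cumulativeSum hw hk le_rfl).trans hprefix
    have := cumulativeSum_sub_pred (fun t => min (cumulativeSum C t) (cumulativeSum w k)) T
    rwa [cumulativeSum_zero, min_eq_right hkT, min_eq_left h0, sub_zero] at this
  simp only [northwestCorner]
  rw [Finset.sum_sub_distrib, hserved j hjT, hserved (j - 1) ((Nat.sub_le j 1).trans hjT),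
    ← cumulativeSum_pred_add w hj1, add_sub_cancel_left]

theorem sum_northwestCorner_demands_le (hC : ∀ t ∈ Finset.Icc 1 T, 0 ≤ C t)
    (ht : t ∈ Finset.Icc 1 T) (n : ℕ) :
    ∑ j ∈ Finset.Icc 1 n, northwestCorner C w t j ≤ C t := by
  obtain ⟨ht1, htT⟩ := Finset.mem_Icc.1 ht
  have hA0 : 0 ≤ cumulativeSum C (t - 1) :=
    cumulativeSum_le_cumulativeSum hC (t - 1).zero_le (by omega)
  have hA : cumulativeSum C (t - 1) ≤ cumulativeSum C t :=
    cumulativeSum_le_cumulativeSum hC (Nat.sub_le t 1) htT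
  calc ∑ j ∈ Finset.Icc 1 n, northwestCorner C w t j
      = min (cumulativeSum C t) (cumulativeSum w n) -
          min (cumulativeSum C (t - 1)) (cumulativeSum w n) := by
        have := cumulativeSum_sub_pred (fun j => min (cumulativeSum C t) (cumulativeSum w j) -
          min (cumulativeSum C (t - 1)) (cumulativeSum w j)) n
        rwa [cumulativeSum_zero, min_eq_right hA0, min_eq_right (hA0.trans hA), sub_self,
          sub_zero] at this
    _ ≤ cumulativeSum C t - cumulativeSum C (t - 1) := min_sub_min_le_sub hA _
    _ = C t := by rw [← cumulativeSum_pred_add C ht1, add_sub_cancel_left]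

end NorthwestCorner

section ServicePlan

variable {R : Type*} [Semiring R] [PartialOrder R]
  {T : ℕ} {C w δ : ℕ → R} {z : ℕ → ℕ → R} {t j : ℕ}

/-- A plan `z` for serving the demands `w` from the capacities `C` without lateness: `z t j` is the
fraction of the demand of period `j` that is produced in period `t`. -/
structure IsServicePlan (T : ℕ) (C w : ℕ → R) (z : ℕ → ℕ → R) : Prop where
  nonneg : ∀ t ∈ Finset.Icc 1 T, ∀ j ∈ Finset.Icc 1 T, 0 ≤ z t j
  eq_zero_of_lt : ∀ t ∈ Finset.Icc 1 T, ∀ j ∈ Finset.Icc 1 T, j < t → z t j = 0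
  sum_eq_one : ∀ j ∈ Finset.Icc 1 T, ∑ t ∈ Finset.Icc 1 T, z t j = 1
  sum_mul_le : ∀ t ∈ Finset.Icc 1 T, ∑ j ∈ Finset.Icc 1 T, w j * z t j ≤ C t

/-- The quantity of an item with demands `δ` that the plan `z` produces in period `t`. -/
def production (T : ℕ) (z : ℕ → ℕ → R) (δ : ℕ → R) (t : ℕ) : R :=
  ∑ j ∈ Finset.Icc 1 T, δ j * z t j

namespace IsServicePlan

theorem cumulativeSum_eq_one (hz : IsServicePlan T C w z) (hj : j ∈ Finset.Icc 1 t) (ht : t ≤ T) :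
    cumulativeSum (fun s => z s j) t = 1 := by
  have hjT : j ∈ Finset.Icc 1 T := Finset.Icc_subset_Icc_right ht hj
  rw [← hz.sum_eq_one j hjT]
  refine Finset.sum_subset (Finset.Icc_subset_Icc_right ht) fun s hs hst => ?_
  refine hz.eq_zero_of_lt s hs j hjT ?_
  simp only [Finset.mem_Icc] at hj hs hst
  omega

theorem sum_mul_production_le {ι : Type*} {s : Finset ι} {K : ι → R} {d : ι → ℕ → R}
    (hz : IsServicePlan T C (fun j => ∑ i ∈ s, K i * d i j) z) (ht : t ∈ Finset.Icc 1 T) :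
    ∑ i ∈ s, K i * production T z (d i) t ≤ C t :=
  calc ∑ i ∈ s, K i * production T z (d i) t
      = ∑ j ∈ Finset.Icc 1 T, (∑ i ∈ s, K i * d i j) * z t j := by
        simp only [production, Finset.mul_sum, Finset.sum_mul, mul_assoc]
        exact Finset.sum_comm
    _ ≤ C t := hz.sum_mul_le t ht

variable [IsOrderedRing R]

theorem le_one (hz : IsServicePlan T C w z) (ht : t ∈ Finset.Icc 1 T) (hj : j ∈ Finset.Icc 1 T) :
    z t j ≤ 1 :=
  hz.sum_eq_one j hj ▸ Finset.single_le_sum (fun s hs => hz.nonneg s hs j hj) ht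

theorem production_nonneg (hz : IsServicePlan T C w z) (hδ : ∀ j ∈ Finset.Icc 1 T, 0 ≤ δ j)
    (ht : t ∈ Finset.Icc 1 T) : 0 ≤ production T z δ t :=
  Finset.sum_nonneg fun j hj => mul_nonneg (hδ j hj) (hz.nonneg t ht j hj)

theorem production_le_remaining_demand (hz : IsServicePlan T C w z)
    (hδ : ∀ j ∈ Finset.Icc 1 T, 0 ≤ δ j) (ht : t ∈ Finset.Icc 1 T) :
    production T z δ t ≤ ∑ j ∈ Finset.Icc t T, δ j := by
  have hsub : Finset.Icc t T ⊆ Finset.Icc 1 T :=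
    Finset.Icc_subset_Icc_left (Finset.mem_Icc.1 ht).1
  calc production T z δ t
      = ∑ j ∈ Finset.Icc t T, δ j * z t j := by
        refine (Finset.sum_subset hsub fun j hj hjt => ?_).symm
        rw [hz.eq_zero_of_lt t ht j hj, mul_zero]
        simp only [Finset.mem_Icc] at hj hjt
        omega
    _ ≤ ∑ j ∈ Finset.Icc t T, δ j := Finset.sum_le_sum fun j hj =>
        mul_le_of_le_one_right (hδ j (hsub hj)) (hz.le_one ht (hsub hj))

theorem cumulativeSum_demand_le_cumulativeSum_production (hz : IsServicePlan T C w z)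
    (hδ : ∀ j ∈ Finset.Icc 1 T, 0 ≤ δ j) (ht : t ≤ T) :
    cumulativeSum δ t ≤ cumulativeSum (production T z δ) t := by
  have hsub : Finset.Icc 1 t ⊆ Finset.Icc 1 T := Finset.Icc_subset_Icc_right ht
  calc cumulativeSum δ t
      = ∑ j ∈ Finset.Icc 1 t, δ j * cumulativeSum (fun s => z s j) t :=
        Finset.sum_congr rfl fun j hj => by rw [hz.cumulativeSum_eq_one hj ht, mul_one]
    _ ≤ ∑ j ∈ Finset.Icc 1 T, δ j * cumulativeSum (fun s => z s j) t :=
        Finset.sum_le_sum_of_subset_of_nonneg hsub fun j hj _ =>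
          mul_nonneg (hδ j hj) (Finset.sum_nonneg fun s hs => hz.nonneg s (hsub hs) j hj)
    _ = cumulativeSum (production T z δ) t := by
        simp only [cumulativeSum, production, Finset.mul_sum]
        exact Finset.sum_comm

end IsServicePlan

end ServicePlan

section NorthwestFraction

variable {𝕜 : Type*} [Field 𝕜] [LinearOrder 𝕜] {T : ℕ} {C w : ℕ → 𝕜} {t j : ℕ}

/-- The fraction of the demand `w j` served from the capacity `C t` by the north-west corner rule.
A demand of zero weight consumes no capacity and is served entirely in its own period. -/
def northwestFraction (C w : ℕ → 𝕜) (t j : ℕ) : 𝕜 :=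
  if w j = 0 then if t = j then 1 else 0 else northwestCorner C w t j / w j

theorem mul_northwestFraction (C : ℕ → 𝕜) (t : ℕ) (hj : 1 ≤ j) :
    w j * northwestFraction C w t j = northwestCorner C w t j := by
  by_cases hwj : w j = 0
  · rw [hwj, zero_mul, northwestCorner_eq_zero_of_weight_eq_zero C t hj hwj]
  · rw [northwestFraction, if_neg hwj, mul_div_cancel₀ _ hwj]

theorem isServicePlan_northwestFraction [IsStrictOrderedRing 𝕜]
    (hw : ∀ j ∈ Finset.Icc 1 T, 0 ≤ w j) (hC : ∀ t ∈ Finset.Icc 1 T, 0 ≤ C t)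
    (hprefix : ∀ t ∈ Finset.Icc 1 T, cumulativeSum w t ≤ cumulativeSum C t) :
    IsServicePlan T C w (northwestFraction C w) where
  nonneg t ht j hj := by
    have hflow : 0 ≤ northwestCorner C w t j :=
      northwestCorner_nonneg hC hw (Finset.mem_Icc.1 ht).2 (Finset.mem_Icc.1 hj).2
    have hwj := hw j hj
    unfold northwestFraction
    split_ifs <;> positivity
  eq_zero_of_lt t ht j hj hjt := by
    have hflow : northwestCorner C w t j = 0 :=
      northwestCorner_eq_zero_of_lt hC hw (Finset.mem_Icc.1 ht).2 hjt (hprefix j hj)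
    simp only [northwestFraction, hjt.ne', hflow, zero_div, if_false, ite_self]
  sum_eq_one j hj := by
    have hT : T ∈ Finset.Icc 1 T := by
      simp only [Finset.mem_Icc] at hj ⊢
      omega
    by_cases hwj : w j = 0
    · simp only [northwestFraction, if_pos hwj, Finset.sum_ite_eq', if_pos hj]
    · simp only [northwestFraction, if_neg hwj]
      rw [← Finset.sum_div, sum_northwestCorner_capacities hw (hprefix T hT) hj, div_self hwj]
  sum_mul_le t ht := by
    rw [Finset.sum_congr rfl fun j hj => mul_northwestFraction C t (Finset.mem_Icc.1 hj).1]
    exact sum_northwestCorner_demands_le hC ht T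

end NorthwestFraction

section CLSP

variable {N T : ℕ} {d : ℕ → ℕ → ℝ} {K C : ℕ → ℝ}

theorem IsServicePlan.clspFeasible {z : ℕ → ℕ → ℝ}
    (hz : IsServicePlan T C (fun j => ∑ i ∈ Finset.Icc 1 N, K i * d i j) z)
    (hd : ∀ i ∈ Finset.Icc 1 N, ∀ t ∈ Finset.Icc 1 T, 0 ≤ d i t)
    (hK : ∀ i ∈ Finset.Icc 1 N, 0 ≤ K i) :
    CLSPFeasible N T d K C (fun i => production T z (d i)) (fun _ _ => 1)
      (fun i t => cumulativeSum (production T z (d i)) t - cumulativeSum (d i) t) := by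
  have hx : ∀ i ∈ Finset.Icc 1 N, ∀ t ∈ Finset.Icc 1 T, 0 ≤ production T z (d i) t :=
    fun i hi t ht => hz.production_nonneg (hd i hi) ht
  have hcapacity : ∀ t ∈ Finset.Icc 1 T,
      ∑ i ∈ Finset.Icc 1 N, K i * production T z (d i) t ≤ C t :=
    fun t ht => hz.sum_mul_production_le ht
  refine ⟨hx, fun i hi t ht => sub_nonneg.2 ?_, fun _ _ _ _ => Or.inr rfl,
    fun i _ => by simp only [cumulativeSum_zero, sub_self], fun i _ t ht => ?_, hcapacity,
    fun i hi t ht hKi => ?_⟩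
  · exact hz.cumulativeSum_demand_le_cumulativeSum_production (hd i hi) (Finset.mem_Icc.1 ht).2
  · have ht1 := (Finset.mem_Icc.1 ht).1
    dsimp only
    rw [← cumulativeSum_pred_add (production T z (d i)) ht1, ← cumulativeSum_pred_add (d i) ht1]
    ring
  · rw [mul_one]
    refine le_min ((le_div_iff₀' hKi).2 ?_) (hz.production_le_remaining_demand (hd i hi) ht)
    exact (Finset.single_le_sum (fun k hk => mul_nonneg (hK k hk) (hx k hk t ht)) hi).trans
      (hcapacity t ht)

namespace CLSPFeasible

variable {x y I : ℕ → ℕ → ℝ} {i t : ℕ}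

theorem cumulativeSum_demand_add_inventory (h : CLSPFeasible N T d K C x y I)
    (hi : i ∈ Finset.Icc 1 N) (ht : t ≤ T) :
    cumulativeSum (d i) t + I i t = cumulativeSum (x i) t := by
  obtain ⟨-, -, -, hI0, hbalance, -, -⟩ := h
  have hinventory : cumulativeSum (fun s => I i s - I i (s - 1)) t = I i t := by
    rw [cumulativeSum_sub_pred, hI0 i hi, sub_zero]
  rw [← hinventory, cumulativeSum, cumulativeSum, ← Finset.sum_add_distrib]
  refine Finset.sum_congr rfl fun s hs => ?_
  linarith [hbalance i hi s (Finset.Icc_subset_Icc_right ht hs)]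

theorem cumulativeSum_demand_le_cumulativeSum_production (h : CLSPFeasible N T d K C x y I)
    (hi : i ∈ Finset.Icc 1 N) (ht : t ∈ Finset.Icc 1 T) :
    cumulativeSum (d i) t ≤ cumulativeSum (x i) t := by
  rw [← h.cumulativeSum_demand_add_inventory hi (Finset.mem_Icc.1 ht).2]
  exact le_add_of_nonneg_right (h.2.1 i hi t ht)

theorem prefix_demand_le_prefix_capacity (h : CLSPFeasible N T d K C x y I)
    (hK : ∀ i ∈ Finset.Icc 1 N, 0 ≤ K i) (ht : t ∈ Finset.Icc 1 T) :
    ∑ j ∈ Finset.Icc 1 t, ∑ i ∈ Finset.Icc 1 N, K i * d i j ≤ ∑ j ∈ Finset.Icc 1 t, C j := by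
  have ⟨_, _, _, _, _, hcapacity, _⟩ := h
  calc ∑ j ∈ Finset.Icc 1 t, ∑ i ∈ Finset.Icc 1 N, K i * d i j
      = ∑ i ∈ Finset.Icc 1 N, K i * cumulativeSum (d i) t := by
        simp only [cumulativeSum, Finset.mul_sum]
        exact Finset.sum_comm
    _ ≤ ∑ i ∈ Finset.Icc 1 N, K i * cumulativeSum (x i) t := Finset.sum_le_sum fun i hi =>
        mul_le_mul_of_nonneg_left (h.cumulativeSum_demand_le_cumulativeSum_production hi ht)
          (hK i hi)
    _ = ∑ j ∈ Finset.Icc 1 t, ∑ i ∈ Finset.Icc 1 N, K i * x i j := by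
        simp only [cumulativeSum, Finset.mul_sum]
        exact Finset.sum_comm
    _ ≤ ∑ j ∈ Finset.Icc 1 t, C j := Finset.sum_le_sum fun j hj =>
        hcapacity j (Finset.Icc_subset_Icc_right (Finset.mem_Icc.1 ht).2 hj)

end CLSPFeasible

end CLSP

/-- with positive unit capacity usages, the CLSP instance has a feasible
solution iff the cumulative capacity covers the cumulative weighted demand in every
prefix of periods. -/
theorem clsp_feasible_iff_prefix_capacity
    (N T : ℕ) (d : ℕ → ℕ → ℝ) (K C : ℕ → ℝ)
    (hd : ∀ i ∈ Finset.Icc 1 N, ∀ t ∈ Finset.Icc 1 T, 0 ≤ d i t)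
    (hK : ∀ i ∈ Finset.Icc 1 N, 0 < K i)
    (hC : ∀ t ∈ Finset.Icc 1 T, 0 ≤ C t) :
    (∃ x y I : ℕ → ℕ → ℝ, CLSPFeasible N T d K C x y I) ↔
      ∀ t ∈ Finset.Icc 1 T,
        (∑ j ∈ Finset.Icc 1 t, ∑ i ∈ Finset.Icc 1 N, K i * d i j)
          ≤ ∑ j ∈ Finset.Icc 1 t, C j := by
  constructor
  · rintro ⟨x, y, I, hfeas⟩ t ht
    exact hfeas.prefix_demand_le_prefix_capacity (fun i hi => (hK i hi).le) ht
  · intro hprefix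
    have hw : ∀ j ∈ Finset.Icc 1 T, 0 ≤ ∑ i ∈ Finset.Icc 1 N, K i * d i j := fun j hj =>
      Finset.sum_nonneg fun i hi => mul_nonneg (hK i hi).le (hd i hi j hj)
    exact ⟨_, _, _, (isServicePlan_northwestFraction hw hC hprefix).clspFeasible hd
      fun i hi => (hK i hi).le⟩
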